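/- Let m ≥ 2, let F_m be a free group with free basis A of size m, let φ : F_m → ℤ be a surjective homomorphism, let a ∈ A ∪ A^{-1} be a letter with φ(a) maximal among all letters of A ∪ A^{-1}, and set C = φ(a). Let R be a normal subgroup of F_m contained in the kernel of φ, and suppose k ≥ 2 satisfies ρ(R) > Ck(2k-3) + 2k - 2. Then the growth rate of F_m/R' with respect to the natural generators is at least d_k^{1/k}, where d_k is the number of good words of length k. -/

import Mathlib

open Filter Topology

/-- Evaluate a word over the alphabet `A^{±1}` (a letter is a pair `(i, b)`, where
`b = true` means the generator `σ i` and `b = false` means its inverse) in a group. -/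
def wordEval {m : ℕ} {G : Type*} [Group G] (σ : Fin m → G)
    (w : List (Fin m × Bool)) : G :=
  (w.map fun ℓ => if ℓ.2 then σ ℓ.1 else (σ ℓ.1)⁻¹).prod

/-- The ball `B(n) = {g ∈ G : ℓ(g) ≤ n}` of radius `n` in a group with respect to the
generating map `σ`: the set of elements represented by words of length at most `n`. -/
def ball {m : ℕ} {G : Type*} [Group G] (σ : Fin m → G) (n : ℕ) : Set G :=
  {g | ∃ w : List (Fin m × Bool), w.length ≤ n ∧ wordEval σ w = g}

/-- The growth rate `ω(G, A) = lim_{n→∞} |B(n)|^{1/n}`; the limit exists by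
submultiplicativity of `|B(n)|`, hence equals the `limsup`. -/
noncomputable def growthRate {m : ℕ} {G : Type*} [Group G] (σ : Fin m → G) : ℝ :=
  Filter.limsup (fun n : ℕ => ((ball σ n).ncard : ℝ) ^ (1 / (n : ℝ))) Filter.atTop

/-- A word is freely reduced iff it is its own free reduction. -/
def IsReducedWord {m : ℕ} (w : List (Fin m × Bool)) : Prop :=
  FreeGroup.reduce w = w

/-- A *good* word w.r.t. `φ : F_m → ℤ` and the letter `a`: freely reduced, first letter
`a`, last letter not `a⁻¹`, positive `φ`-value. -/
def IsGoodWord {m : ℕ} (φ : FreeGroup (Fin m) → ℤ) (a : Fin m × Bool)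
    (w : List (Fin m × Bool)) : Prop :=
  IsReducedWord w ∧ w.head? = some a ∧ w.getLast? ≠ some (a.1, !a.2) ∧
    0 < φ (FreeGroup.mk w)

/-!
The Magnus homomorphism sends a word to its endpoint in `F / R` together with its flow: the
signed number of times its path in the Cayley graph of `F / R` crosses each edge. It kills `R'`.
If the path never revisits a vertex, then the flow through the edges at the starting point
comes from the first letter alone, so the flow determines the word letter by letter; hence words
tracing simple paths have distinct images in `F / R'`.

A concatenation of good words of length `k` traces a simple path. It is reduced, and since every
complete block raises `φ` by at least `1` while a partial block costs at most a multiple of `C`,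
a subword on which `φ` vanishes is no longer than `C k (2k - 3) + 2k - 2`, too short to lie in `R`.
Thus the `d_k ^ n` concatenations of `n` good words are distinct in the ball of radius `n k`.
-/

section Magnus

variable {α Q : Type*} [Group Q] (π : FreeGroup α →* Q)

/-- The edge traversed when reading the letter `x` from the vertex `g` of the Cayley graph of `Q`.
The pair `(h, i)` encodes the edge from `h` to `h * π (of i)`; an inverse letter traverses it
backwards. -/
def cayleyEdge (g : Q) (x : α × Bool) : Q × α :=
  (if x.2 then g else g * π (FreeGroup.mk [x]), x.1)

/-- The word `w` traces a path without repeated vertices in the Cayley graph of `Q`; equivalently,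
as encoded here, no nonempty subword of `w` becomes trivial in `Q`. -/
def IsSimplePath (w : List (α × Bool)) : Prop :=
  ∀ p, p <:+: w → p ≠ [] → π (FreeGroup.mk p) ≠ 1

variable {π}

theorem IsSimplePath.of_cons {x : α × Bool} {w : List (α × Bool)} (h : IsSimplePath π (x :: w)) :
    IsSimplePath π w :=
  fun p hp => h p (hp.trans (List.suffix_cons x w).isInfix)

theorem mk_cons_eq_mul (x : α × Bool) (w : List (α × Bool)) :
    FreeGroup.mk (x :: w) = FreeGroup.mk [x] * FreeGroup.mk w := by
  rw [FreeGroup.mul_mk, List.singleton_append]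

theorem cayleyEdge_mul (h g : Q) (x : α × Bool) :
    cayleyEdge π (h * g) x = (h * (cayleyEdge π g x).1, (cayleyEdge π g x).2) := by
  simp only [cayleyEdge, mul_assoc, mul_ite]

theorem eq_or_eq_mul_of_cayleyEdge_eq {h g : Q} {y x : α × Bool}
    (hyx : cayleyEdge π h y = cayleyEdge π g x) : h = g ∨ h = g * π (FreeGroup.mk [x]) := by
  obtain ⟨j, c⟩ := y
  obtain ⟨i, b⟩ := x
  obtain ⟨hvertex, rfl⟩ : _ ∧ j = i := Prod.ext_iff.1 hyx
  have hinv : FreeGroup.mk [(j, false)] = (FreeGroup.mk [(j, true)])⁻¹ := rfl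
  cases c <;> cases b <;> simp only [cayleyEdge, hinv, map_inv, if_true, Bool.false_eq_true,
    if_false, mul_inv_eq_iff_eq_mul, mul_left_inj] at hvertex ⊢
  · exact .inl hvertex
  · exact .inr hvertex
  · exact .inr hvertex
  · exact .inl hvertex

variable [DecidableEq α] [DecidableEq Q] (π)

/-- The Magnus homomorphism over `π : FreeGroup α →* Q`. Its second component is `π`; its first
component records the flow through the edges of the Cayley graph of `Q`, see `cayleyFlow`. -/
def magnusHom : FreeGroup α →* (α → Multiplicative ℤ) ≀ᵣ Q :=
  FreeGroup.lift fun i =>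
    ⟨Pi.mulSingle 1 (Pi.mulSingle i (Multiplicative.ofAdd 1)), π (FreeGroup.of i)⟩

/-- The flow of `x`: the number of times, counted with sign, that the path from `1` labelled by `x`
crosses each edge of the Cayley graph of `Q`. -/
def cayleyFlow (x : FreeGroup α) (e : Q × α) : ℤ :=
  ((magnusHom π x).left e.1 e.2).toAdd

theorem magnusHom_right (x : FreeGroup α) : (magnusHom π x).right = π x := by
  have : RegularWreathProduct.rightHom.comp (magnusHom π) = π := by
    ext i
    simp [magnusHom]
  exact DFunLike.congr_fun this x

theorem commutator_ker_le_ker_magnusHom : ⁅π.ker, π.ker⁆ ≤ (magnusHom π).ker := by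
  rw [Subgroup.commutator_le]
  intro g hg h hh
  rw [MonoidHom.mem_ker, map_commutatorElement, commutatorElement_eq_one_iff_mul_comm]
  have hg1 : (magnusHom π g).right = 1 := (magnusHom_right π g).trans hg
  have hh1 : (magnusHom π h).right = 1 := (magnusHom_right π h).trans hh
  ext <;> simp [hg1, hh1, mul_comm]

theorem cayleyFlow_one (e : Q × α) : cayleyFlow π 1 e = 0 := by
  simp [cayleyFlow]

theorem cayleyFlow_mul (x y : FreeGroup α) (e : Q × α) :
    cayleyFlow π (x * y) e = cayleyFlow π x e + cayleyFlow π y ((π x)⁻¹ * e.1, e.2) := by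
  simp [cayleyFlow, magnusHom_right]

theorem cayleyFlow_inv (x : FreeGroup α) (e : Q × α) :
    cayleyFlow π x⁻¹ e = -cayleyFlow π x (π x * e.1, e.2) := by
  simp [cayleyFlow, magnusHom_right]

theorem cayleyFlow_of (i : α) (e : Q × α) :
    cayleyFlow π (FreeGroup.of i) e = if e = (1, i) then 1 else 0 := by
  obtain ⟨g, j⟩ := e
  by_cases hg : g = 1 <;> by_cases hj : j = i <;> simp [cayleyFlow, magnusHom, hg, hj]

theorem cayleyFlow_letter (x : α × Bool) (e : Q × α) :
    cayleyFlow π (FreeGroup.mk [x]) e =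
      if e = cayleyEdge π 1 x then (if x.2 then 1 else -1) else 0 := by
  obtain ⟨i, b⟩ := x
  cases b
  · have hinv : FreeGroup.mk [(i, false)] = (FreeGroup.of i)⁻¹ := rfl
    have hedge : (π (FreeGroup.of i) * e.1, e.2) = ((1 : Q), i) ↔
        e = cayleyEdge π 1 (i, false) := by
      simp [cayleyEdge, hinv, Prod.ext_iff, mul_eq_one_iff_eq_inv']
    simp only [hinv, cayleyFlow_inv, cayleyFlow_of, hedge]
    split_ifs <;> simp_all
  · exact cayleyFlow_of π i e

theorem cayleyFlow_edge_eq_zero (x : α × Bool) {w : List (α × Bool)} {h : Q}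
    (havoid : ∀ p, p <+: w → π (FreeGroup.mk p) ≠ h) :
    cayleyFlow π (FreeGroup.mk w) (cayleyEdge π h x) = 0 := by
  induction w generalizing h with
  | nil => rw [← FreeGroup.one_eq_mk, cayleyFlow_one]
  | cons y w ih =>
    have htail : cayleyFlow π (FreeGroup.mk w)
        (cayleyEdge π ((π (FreeGroup.mk [y]))⁻¹ * h) x) = 0 := by
      refine ih fun p hp hph => havoid (y :: p) (List.cons_prefix_cons.2 ⟨rfl, hp⟩) ?_
      rw [mk_cons_eq_mul, map_mul, hph, mul_inv_cancel_left]
    have hfirst : cayleyEdge π h x ≠ cayleyEdge π 1 y := by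
      intro heq
      rcases eq_or_eq_mul_of_cayleyEdge_eq heq with hstart | hend
      · exact havoid [] List.nil_prefix (by rw [← FreeGroup.one_eq_mk, map_one, hstart])
      · exact havoid [y] (by simp) (by rw [hend, one_mul])
    rw [mk_cons_eq_mul, cayleyFlow_mul, ← cayleyEdge_mul, htail, add_zero, cayleyFlow_letter,
      if_neg hfirst]

variable {π}

theorem IsSimplePath.cayleyFlow_edge_one {x : α × Bool} {w : List (α × Bool)}
    (h : IsSimplePath π (x :: w)) (y : α × Bool) :
    cayleyFlow π (FreeGroup.mk (x :: w)) (cayleyEdge π 1 y) =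
      cayleyFlow π (FreeGroup.mk [x]) (cayleyEdge π 1 y) := by
  rw [mk_cons_eq_mul, cayleyFlow_mul, ← cayleyEdge_mul, add_eq_left]
  refine cayleyFlow_edge_eq_zero π y fun p hp hback => ?_
  refine h (x :: p) (List.cons_prefix_cons.2 ⟨rfl, hp⟩).isInfix (List.cons_ne_nil x p) ?_
  rw [mk_cons_eq_mul, map_mul, hback, mul_one, mul_inv_cancel]

theorem cayleyFlow_letter_self_ne_zero (x : α × Bool) :
    cayleyFlow π (FreeGroup.mk [x]) (cayleyEdge π 1 x) ≠ 0 := by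
  rw [cayleyFlow_letter, if_pos rfl]
  split_ifs <;> decide

theorem eq_of_cayleyFlow_letter_eq {x y : α × Bool}
    (h : cayleyFlow π (FreeGroup.mk [x]) (cayleyEdge π 1 x) =
      cayleyFlow π (FreeGroup.mk [y]) (cayleyEdge π 1 x)) : x = y := by
  have hne := h ▸ cayleyFlow_letter_self_ne_zero (π := π) x
  rw [cayleyFlow_letter] at hne
  have hedge : cayleyEdge π 1 x = cayleyEdge π 1 y := of_not_not fun hxy => hne (if_neg hxy)
  rw [cayleyFlow_letter, cayleyFlow_letter, if_pos rfl, if_pos hedge] at h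
  refine Prod.ext (congrArg Prod.snd hedge) ?_
  cases hx : x.2 <;> cases hy : y.2 <;> simp_all

theorem magnusHom_injOn_isSimplePath :
    Set.InjOn (fun w => magnusHom π (FreeGroup.mk w)) {w | IsSimplePath π w} := by
  have nil_of_eq (w : List (α × Bool)) (hw : IsSimplePath π w)
      (h : magnusHom π (FreeGroup.mk []) = magnusHom π (FreeGroup.mk w)) : [] = w := by
    rcases w with _ | ⟨x, w⟩
    · rfl
    · refine absurd ?_ (cayleyFlow_letter_self_ne_zero (π := π) x)
      rw [← hw.cayleyFlow_edge_one, cayleyFlow, ← h, ← FreeGroup.one_eq_mk]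
      exact cayleyFlow_one π _
  intro u hu v hv h
  induction u generalizing v with
  | nil => exact nil_of_eq v hv h
  | cons x u ih =>
    rcases v with _ | ⟨y, v⟩
    · exact (nil_of_eq _ hu h.symm).symm
    · have hflow : cayleyFlow π (FreeGroup.mk (x :: u)) (cayleyEdge π 1 x) =
          cayleyFlow π (FreeGroup.mk (y :: v)) (cayleyEdge π 1 x) :=
        congrArg (fun z => (z.left (cayleyEdge π 1 x).1 (cayleyEdge π 1 x).2).toAdd) h
      obtain rfl : x = y := eq_of_cayleyFlow_letter_eq (by
        rwa [hu.cayleyFlow_edge_one, hv.cayleyFlow_edge_one] at hflow)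
      have htail : magnusHom π (FreeGroup.mk u) = magnusHom π (FreeGroup.mk v) := by
        simp only [mk_cons_eq_mul x u, mk_cons_eq_mul x v, map_mul] at h
        exact mul_left_cancel h
      rw [ih hu.of_cons hv.of_cons htail]

end Magnus

theorem mk_commutator_injOn_isSimplePath {α : Type*} (R : Subgroup (FreeGroup α)) [R.Normal] :
    Set.InjOn (fun w => (QuotientGroup.mk (FreeGroup.mk w) : FreeGroup α ⧸ ⁅R, R⁆))
      {w | IsSimplePath (QuotientGroup.mk' R) w} := by
  classical
  intro u hu v hv huv
  refine magnusHom_injOn_isSimplePath hu hv ?_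
  have hmem : (FreeGroup.mk v)⁻¹ * FreeGroup.mk u ∈ (magnusHom (QuotientGroup.mk' R)).ker := by
    apply commutator_ker_le_ker_magnusHom
    rw [QuotientGroup.ker_mk']
    exact QuotientGroup.eq.1 huv.symm
  exact (MonoidHom.eq_iff _).2 hmem

section BlockSums

theorem exists_suffix_of_suffix_flatten {β : Type*} {k : ℕ} (hk : 0 < k) {L : List (List β)}
    (hlen : ∀ w ∈ L, w.length = k) {t : List β} (ht : t <:+ L.flatten) :
    ∃ s L', s.length < k ∧ L' <:+ L ∧ t = s ++ L'.flatten := by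
  induction L with
  | nil => exact ⟨[], [], hk, List.suffix_rfl, by simpa using ht⟩
  | cons w L ih =>
    rw [List.flatten_cons] at ht
    rcases List.suffix_or_suffix_of_suffix ht (List.suffix_append w L.flatten) with hrest | ⟨s, rfl⟩
    · obtain ⟨s, L', hs, hL', rfl⟩ := ih (List.forall_mem_cons.1 hlen).2 hrest
      exact ⟨s, L', hs, hL'.trans (List.suffix_cons w L), rfl⟩
    · have hsw : s <:+ w := by
        obtain ⟨r, hr⟩ := ht
        exact ⟨r, List.append_cancel_right (by rwa [← List.append_assoc] at hr)⟩
      have hw : w.length = k := hlen w List.mem_cons_self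
      rcases (hw ▸ hsw.length_le : s.length ≤ k).lt_or_eq with hs | hs
      · exact ⟨s, L, hs, List.suffix_cons w L, rfl⟩
      · obtain rfl := hsw.eq_of_length (hs.trans hw.symm)
        exact ⟨[], s :: L, hk, List.suffix_rfl, rfl⟩

variable {k : ℕ} {C : ℤ}

/-- The letter heights of a good word of length `k`, with `C` the largest height of a letter: the
block starts with `C`, no entry is below `-C`, and the sum is positive. -/
structure IsAscendingBlock (k : ℕ) (C : ℤ) (w : List ℤ) : Prop where
  length_eq : w.length = k
  head?_eq : w.head? = some C
  neg_le : ∀ x ∈ w, -C ≤ x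
  sum_pos : 0 < w.sum

theorem neg_mul_length_le_sum {s : List ℤ} (h : ∀ x ∈ s, -C ≤ x) : -(C * s.length) ≤ s.sum := by
  have := List.card_nsmul_le_sum s (-C) h
  rw [nsmul_eq_mul] at this
  linarith

theorem IsAscendingBlock.neg_mul_le_sum_of_prefix {w p : List ℤ} (hw : IsAscendingBlock k C w)
    (hk : 2 ≤ k) (hC : 0 ≤ C) (hp : p <+: w) (hpk : p.length < k) :
    -(C * (k - 2)) ≤ p.sum := by
  have hk' : (0 : ℤ) ≤ k - 2 := by omega
  rcases p with _ | ⟨x, p⟩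
  · simpa using mul_nonneg hC hk'
  · obtain rfl : x = C := by
      obtain ⟨t, rfl⟩ := hp
      simpa using hw.head?_eq
    have hsum : -(x * p.length) ≤ p.sum :=
      neg_mul_length_le_sum fun y hy => hw.neg_le y (hp.subset (List.mem_cons_of_mem x hy))
    have hplen : x * (p.length : ℤ) ≤ x * (k - 1) :=
      mul_le_mul_of_nonneg_left (by rw [List.length_cons] at hpk; omega) hC
    rw [List.sum_cons]
    linarith

variable {L : List (List ℤ)}

theorem length_le_of_prefix_flatten (hk : 2 ≤ k) (hC : 0 ≤ C)
    (hL : ∀ w ∈ L, IsAscendingBlock k C w) {p : List ℤ} (hp : p <+: L.flatten) :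
    (p.length : ℤ) ≤ k * (p.sum + C * (k - 2)) + (k - 1) := by
  have of_short {q : List ℤ} (hqk : q.length < k) (hq : -(C * (k - 2)) ≤ q.sum) :
      (q.length : ℤ) ≤ k * (q.sum + C * (k - 2)) + (k - 1) := by
    have : 0 ≤ (k : ℤ) * (q.sum + C * (k - 2)) := mul_nonneg (by omega) (by linarith)
    omega
  induction L generalizing p with
  | nil =>
    obtain rfl : p = [] := List.prefix_nil.1 hp
    have : 0 ≤ C * ((k : ℤ) - 2) := mul_nonneg hC (by omega)
    exact of_short (by simp only [List.length_nil]; omega) (by simpa using this)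
  | cons w L ih =>
    rw [List.flatten_cons] at hp
    obtain ⟨hw, hL⟩ := List.forall_mem_cons.1 hL
    rcases lt_or_ge p.length k with hpk | hpk
    · have hpw : p <+: w := List.prefix_of_prefix_length_le hp (List.prefix_append w _)
        (hpk.le.trans hw.length_eq.ge)
      exact of_short hpk (hw.neg_mul_le_sum_of_prefix hk hC hpw hpk)
    · obtain ⟨q, rfl⟩ : w <+: p := List.prefix_of_prefix_length_le (List.prefix_append w _) hp
        (hw.length_eq.le.trans hpk)
      have hq := ih hL ((List.prefix_append_right_inj w).1 hp)
      have hblock : (k : ℤ) * 1 ≤ k * w.sum := mul_le_mul_of_nonneg_left hw.sum_pos (by omega)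
      rw [List.length_append, hw.length_eq, List.sum_append]
      push_cast
      linarith

theorem length_le_of_infix_flatten (hk : 2 ≤ k) (hC : 0 ≤ C)
    (hL : ∀ w ∈ L, IsAscendingBlock k C w) {p : List ℤ} (hp : p <:+: L.flatten) :
    (p.length : ℤ) ≤ k * (p.sum + C * (2 * k - 3)) + (2 * k - 2) := by
  have hlow : ∀ x ∈ p, -C ≤ x := fun x hx => by
    obtain ⟨w, hw, hxw⟩ := List.mem_flatten.1 (hp.subset hx)
    exact (hL w hw).neg_le x hxw
  obtain ⟨s, t, hs, rfl, ht⟩ : ∃ s t, s.length < k ∧ p = s ++ t ∧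
      (t.length : ℤ) ≤ k * (t.sum + C * (k - 2)) + (k - 1) := by
    obtain ⟨u, hpu, hu⟩ := List.infix_iff_prefix_suffix.1 hp
    obtain ⟨s, L', hs, hL', rfl⟩ :=
      exists_suffix_of_suffix_flatten (by omega) (fun w hw => (hL w hw).length_eq) hu
    have hL'' : ∀ w ∈ L', IsAscendingBlock k C w := fun w hw => hL w (hL'.subset hw)
    rcases List.prefix_or_prefix_of_prefix hpu (List.prefix_append s L'.flatten) with hps | ⟨t, rfl⟩
    · exact ⟨p, [], hps.length_le.trans_lt hs, (List.append_nil p).symm,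
        length_le_of_prefix_flatten hk hC hL'' List.nil_prefix⟩
    · exact ⟨s, t, hs, rfl, length_le_of_prefix_flatten hk hC hL''
        ((List.prefix_append_right_inj s).1 hpu)⟩
  have hsum : -(C * s.length) ≤ s.sum :=
    neg_mul_length_le_sum fun x hx => hlow x (List.mem_append_left t hx)
  have hslen : C * (s.length : ℤ) ≤ C * (k - 1) := mul_le_mul_of_nonneg_left (by omega) hC
  have hpartial : 0 ≤ (k : ℤ) * (s.sum + C * (k - 1)) := mul_nonneg (by omega) (by linarith)
  rw [List.length_append, List.sum_append]
  push_cast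
  linarith

end BlockSums

section GoodWords

variable {α : Type*}

theorem isReduced_flatten {a : α × Bool} {L : List (List (α × Bool))}
    (hred : ∀ w ∈ L, FreeGroup.IsReduced w) (hhead : ∀ w ∈ L, w.head? = some a)
    (hlast : ∀ w ∈ L, w.getLast? ≠ some (a.1, !a.2)) : FreeGroup.IsReduced L.flatten := by
  have hne : [] ∉ L := fun h => by simpa using hhead [] h
  refine (List.isChain_flatten hne).2 ⟨hred, ?_⟩
  rw [List.isChain_iff_forall_rel_of_append_cons_cons]
  rintro u v l₁ l₂ rfl x hx y hy hxy
  obtain rfl : y = a := Option.some_injective _ (hy.symm.trans (hhead v (by simp)))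
  by_contra hsign
  exact hlast u (by simp) (hx.trans (congrArg some (Prod.ext hxy (Bool.eq_not.2 hsign))))

theorem norm_mk_of_isReduced [DecidableEq α] {w : List (α × Bool)} (hw : FreeGroup.IsReduced w) :
    (FreeGroup.mk w).norm = w.length := by
  rw [FreeGroup.norm, FreeGroup.toWord_mk, hw.reduce_eq]

theorem mk_ne_one_of_isReduced {w : List (α × Bool)} (hw : FreeGroup.IsReduced w) (hne : w ≠ []) :
    FreeGroup.mk w ≠ 1 := by
  classical
  rw [← FreeGroup.norm_eq_zero.ne, norm_mk_of_isReduced hw]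
  exact List.length_eq_zero_iff.ne.2 hne

theorem map_one_eq_zero_of_map_mul {G A : Type*} [MulOneClass G] [AddGroup A] {φ : G → A}
    (hφ : ∀ x y, φ (x * y) = φ x + φ y) : φ 1 = 0 := by
  simpa using hφ 1 1

theorem map_mk_eq_sum {A : Type*} [AddGroup A] {φ : FreeGroup α → A}
    (hφ : ∀ x y, φ (x * y) = φ x + φ y) (w : List (α × Bool)) :
    φ (FreeGroup.mk w) = (w.map fun x => φ (FreeGroup.mk [x])).sum := by
  induction w with
  | nil => exact map_one_eq_zero_of_map_mul hφ
  | cons x w ih => rw [mk_cons_eq_mul, hφ, ih, List.map_cons, List.sum_cons]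

theorem neg_le_map_letter {φ : FreeGroup α → ℤ} (hφ : ∀ x y, φ (x * y) = φ x + φ y) {C : ℤ}
    (hC : ∀ x : α × Bool, φ (FreeGroup.mk [x]) ≤ C) (x : α × Bool) :
    -C ≤ φ (FreeGroup.mk [x]) := by
  have hcancel : FreeGroup.mk [x] * FreeGroup.mk [(x.1, !x.2)] = 1 :=
    mul_inv_cancel (FreeGroup.mk [x])
  have := hφ (FreeGroup.mk [x]) (FreeGroup.mk [(x.1, !x.2)])
  rw [hcancel, map_one_eq_zero_of_map_mul hφ] at this
  linarith [hC (x.1, !x.2)]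

variable {m k : ℕ} {φ : FreeGroup (Fin m) → ℤ} {a : Fin m × Bool}

theorem IsGoodWord.isAscendingBlock {w : List (Fin m × Bool)} (hw : IsGoodWord φ a w)
    (hφ : ∀ x y, φ (x * y) = φ x + φ y)
    (ha : ∀ ℓ : Fin m × Bool, φ (FreeGroup.mk [ℓ]) ≤ φ (FreeGroup.mk [a])) :
    IsAscendingBlock w.length (φ (FreeGroup.mk [a])) (w.map fun x => φ (FreeGroup.mk [x])) where
  length_eq := List.length_map _
  head?_eq := by rw [List.head?_map, hw.2.1, Option.map_some]
  neg_le := List.forall_mem_map.2 fun x _ => neg_le_map_letter hφ ha x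
  sum_pos := map_mk_eq_sum hφ w ▸ hw.2.2.2

theorem length_le_of_infix_flatten_of_map_eq_zero (hk : 2 ≤ k)
    (hφ : ∀ x y, φ (x * y) = φ x + φ y)
    (ha : ∀ ℓ : Fin m × Bool, φ (FreeGroup.mk [ℓ]) ≤ φ (FreeGroup.mk [a]))
    {L : List (List (Fin m × Bool))} (hL : ∀ w ∈ L, w.length = k ∧ IsGoodWord φ a w)
    {p : List (Fin m × Bool)} (hp : p <:+: L.flatten) (hp0 : φ (FreeGroup.mk p) = 0) :
    (p.length : ℤ) ≤ φ (FreeGroup.mk [a]) * k * (2 * (k : ℤ) - 3) + 2 * k - 2 := by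
  have hC : 0 ≤ φ (FreeGroup.mk [a]) := by linarith [neg_le_map_letter hφ ha a]
  have hblocks : ∀ w ∈ L.map (List.map fun x => φ (FreeGroup.mk [x])),
      IsAscendingBlock k (φ (FreeGroup.mk [a])) w :=
    List.forall_mem_map.2 fun w hw => (hL w hw).1 ▸ (hL w hw).2.isAscendingBlock hφ ha
  have := length_le_of_infix_flatten hk hC hblocks
    (List.map_flatten ▸ hp.map fun x => φ (FreeGroup.mk [x]))
  rw [List.length_map, ← map_mk_eq_sum hφ, hp0] at this
  linarith

theorem isSimplePath_flatten_of_isGoodWord (hk : 2 ≤ k)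
    (hφ : ∀ x y, φ (x * y) = φ x + φ y)
    (ha : ∀ ℓ : Fin m × Bool, φ (FreeGroup.mk [ℓ]) ≤ φ (FreeGroup.mk [a]))
    {R : Subgroup (FreeGroup (Fin m))} [R.Normal] (hker : ∀ g ∈ R, φ g = 0)
    (hρ : ∀ g ∈ R, g ≠ 1 →
      φ (FreeGroup.mk [a]) * k * (2 * (k : ℤ) - 3) + 2 * k - 2 < (FreeGroup.norm g : ℤ))
    {L : List (List (Fin m × Bool))} (hL : ∀ w ∈ L, w.length = k ∧ IsGoodWord φ a w) :
    IsSimplePath (QuotientGroup.mk' R) L.flatten := by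
  intro p hp hne hpR
  replace hpR : FreeGroup.mk p ∈ R := (QuotientGroup.eq_one_iff _).1 hpR
  have hred : FreeGroup.IsReduced p :=
    (isReduced_flatten (fun w hw => FreeGroup.isReduced_iff_reduce_eq.2 (hL w hw).2.1)
      (fun w hw => (hL w hw).2.2.1) (fun w hw => (hL w hw).2.2.2.1)).infix hp
  have hlong := hρ _ hpR (mk_ne_one_of_isReduced hred hne)
  rw [norm_mk_of_isReduced hred] at hlong
  exact hlong.not_ge (length_le_of_infix_flatten_of_map_eq_zero hk hφ ha hL hp (hker _ hpR))

end GoodWords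

section Growth

open scoped Pointwise

variable {m : ℕ} {G : Type*} [Group G] (σ : Fin m → G)

theorem wordEval_eq_lift (w : List (Fin m × Bool)) :
    wordEval σ w = FreeGroup.lift σ (FreeGroup.mk w) := by
  simp only [wordEval, FreeGroup.lift_mk, Bool.cond_eq_ite]

theorem wordEval_mk_of (N : Subgroup (FreeGroup (Fin m))) [N.Normal] (w : List (Fin m × Bool)) :
    wordEval (fun i => (QuotientGroup.mk (FreeGroup.of i) : FreeGroup (Fin m) ⧸ N)) w =
      QuotientGroup.mk (FreeGroup.mk w) := by
  rw [wordEval_eq_lift]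
  exact (FreeGroup.lift_unique (QuotientGroup.mk' N) fun _ => rfl).symm

theorem finite_ball (n : ℕ) : (ball σ n).Finite :=
  (List.finite_length_le (Fin m × Bool) n).image (wordEval σ)

theorem ball_add_subset (p q : ℕ) : ball σ (p + q) ⊆ ball σ p * ball σ q := by
  rintro _ ⟨w, hw, rfl⟩
  refine ⟨wordEval σ (w.take p), ⟨w.take p, List.length_take_le p w, rfl⟩,
    wordEval σ (w.drop p), ⟨w.drop p, by rw [List.length_drop]; omega, rfl⟩, ?_⟩
  simp only [wordEval, ← List.prod_append, ← List.map_append, List.take_append_drop]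

theorem ncard_ball_add_le (p q : ℕ) :
    (ball σ (p + q)).ncard ≤ (ball σ p).ncard * (ball σ q).ncard :=
  (Set.ncard_le_ncard (ball_add_subset σ p q) ((finite_ball σ p).mul (finite_ball σ q))).trans
    (by simpa only [Nat.card_coe_set_eq] using Set.natCard_mul_le (s := ball σ p) (t := ball σ q))

theorem ball_zero : ball σ 0 = {1} := by
  ext g
  simp [ball, wordEval, eq_comm (a := g)]

theorem ncard_ball_le_pow (n : ℕ) : (ball σ n).ncard ≤ (ball σ 1).ncard ^ n := by
  induction n with
  | zero => rw [ball_zero, Set.ncard_singleton, pow_zero]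
  | succ n ih => exact (ncard_ball_add_le σ n 1).trans (Nat.mul_le_mul_right _ ih)

theorem isBoundedUnder_ncard_ball_rpow :
    IsBoundedUnder (· ≤ ·) atTop fun n : ℕ => ((ball σ n).ncard : ℝ) ^ (1 / (n : ℝ)) := by
  refine isBoundedUnder_of_eventually_le (a := ((ball σ 1).ncard : ℝ)) ?_
  filter_upwards [eventually_gt_atTop 0] with n hn
  calc ((ball σ n).ncard : ℝ) ^ (1 / (n : ℝ))
      ≤ (((ball σ 1).ncard : ℝ) ^ n) ^ (1 / (n : ℝ)) := by
        gcongr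
        exact_mod_cast ncard_ball_le_pow σ n
    _ = (ball σ 1).ncard := by
        rw [one_div, Real.pow_rpow_inv_natCast (Nat.cast_nonneg _) hn.ne']

variable {σ} {k : ℕ} {W : Set (List (Fin m × Bool))}

theorem ncard_pow_le_ncard_ball (hlen : ∀ w ∈ W, w.length = k)
    (hinj : Set.InjOn (wordEval σ) (List.flatten '' {L | ∀ w ∈ L, w ∈ W})) (n : ℕ) :
    W.ncard ^ n ≤ (ball σ (n * k)).ncard := by
  let blocks (f : Fin n → W) : List (List (Fin m × Bool)) := List.ofFn fun i => (f i).1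
  have hmem (f : Fin n → W) : ∀ w ∈ blocks f, w ∈ W :=
    List.forall_mem_ofFn_iff.2 fun i => (f i).2
  have hlengths (f : Fin n → W) : (blocks f).map List.length = List.replicate n k :=
    List.eq_replicate_iff.2 ⟨by simp [blocks],
      List.forall_mem_map.2 fun w hw => hlen w (hmem f w hw)⟩
  let value (f : Fin n → W) : G := wordEval σ (blocks f).flatten
  have hvalue : Function.Injective value := by
    intro f g hfg
    have hflat : (blocks f).flatten = (blocks g).flatten :=
      hinj ⟨_, hmem f, rfl⟩ ⟨_, hmem g, rfl⟩ hfg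
    have hblocks : blocks f = blocks g :=
      List.eq_iff_flatten_eq.2 ⟨hflat, (hlengths f).trans (hlengths g).symm⟩
    exact funext fun i => Subtype.ext (congrFun (List.ofFn_injective hblocks) i)
  have hrange : Set.range value ⊆ ball σ (n * k) := by
    rintro _ ⟨f, rfl⟩
    exact ⟨_, by rw [List.length_flatten, hlengths, List.sum_replicate, smul_eq_mul], rfl⟩
  calc W.ncard ^ n = Nat.card (Fin n → W) := by
        rw [Nat.card_fun, Nat.card_fin, Nat.card_coe_set_eq]
    _ = (Set.range value).ncard := by
        rw [← Nat.card_coe_set_eq, Nat.card_range_of_injective hvalue]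
    _ ≤ (ball σ (n * k)).ncard := Set.ncard_le_ncard hrange (finite_ball σ _)

theorem ncard_rpow_le_growthRate (hk : k ≠ 0) (hlen : ∀ w ∈ W, w.length = k)
    (hinj : Set.InjOn (wordEval σ) (List.flatten '' {L | ∀ w ∈ L, w ∈ W})) :
    (W.ncard : ℝ) ^ (1 / (k : ℝ)) ≤ growthRate σ := by
  refine le_limsup_of_frequently_le (frequently_atTop.2 fun N => ⟨(N + 1) * k, ?_, ?_⟩)
    (isBoundedUnder_ncard_ball_rpow σ)
  · exact N.le_succ.trans (Nat.le_mul_of_pos_right _ hk.bot_lt)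
  · calc (W.ncard : ℝ) ^ (1 / (k : ℝ))
        = ((W.ncard : ℝ) ^ (N + 1)) ^ (1 / (((N + 1) * k : ℕ) : ℝ)) := by
          rw [← Real.rpow_natCast, ← Real.rpow_mul (Nat.cast_nonneg _)]
          congr 1
          push_cast
          field_simp
      _ ≤ ((ball σ ((N + 1) * k)).ncard : ℝ) ^ (1 / (((N + 1) * k : ℕ) : ℝ)) := by
          gcongr
          exact_mod_cast ncard_pow_le_ncard_ball hlen hinj (N + 1)

end Growth

/-- If `R ⊴ F_m` is contained in the kernel of the surjective
homomorphism `φ : F_m → ℤ`, `a` is a letter of maximal `φ`-value, `C = φ(a)`, and `k ≥ 2`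
satisfies `ρ(R) > Ck(2k-3) + 2k - 2` (every nontrivial element of `R` is longer than this
bound), then the growth rate of `F_m/R'` w.r.t. the natural generators is at least
`d_k^{1/k}`, where `d_k` is the number of good words of length `k`. -/
theorem growth_rate_ge_good_words_root (m k : ℕ) (hm : 2 ≤ m) (hk : 2 ≤ k)
    (φ : FreeGroup (Fin m) → ℤ)
    (hφ : ∀ x y : FreeGroup (Fin m), φ (x * y) = φ x + φ y)
    (hsurj : Function.Surjective φ)
    (a : Fin m × Bool)
    (ha : ∀ ℓ : Fin m × Bool, φ (FreeGroup.mk [ℓ]) ≤ φ (FreeGroup.mk [a]))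
    (R : Subgroup (FreeGroup (Fin m))) [R.Normal]
    (hker : ∀ g ∈ R, φ g = 0)
    (hρ : ∀ g ∈ R, g ≠ 1 →
      φ (FreeGroup.mk [a]) * k * (2 * (k : ℤ) - 3) + 2 * k - 2 < (FreeGroup.norm g : ℤ)) :
    ((Set.ncard {w : List (Fin m × Bool) | w.length = k ∧ IsGoodWord φ a w} : ℝ))
        ^ (1 / (k : ℝ)) ≤
      growthRate (fun i =>
        (QuotientGroup.mk (FreeGroup.of i) : FreeGroup (Fin m) ⧸ ⁅R, R⁆)) := by
  refine ncard_rpow_le_growthRate (by omega) (fun w hw => hw.1) ?_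
  have hsimple : List.flatten '' {L | ∀ w ∈ L, w.length = k ∧ IsGoodWord φ a w} ⊆
      {w | IsSimplePath (QuotientGroup.mk' R) w} :=
    Set.image_subset_iff.2 fun _ hL => isSimplePath_flatten_of_isGoodWord hk hφ ha hker hρ hL
  intro u hu v hv huv
  rw [wordEval_mk_of, wordEval_mk_of] at huv
  exact mk_commutator_injOn_isSimplePath R (hsimple hu) (hsimple hv) huv
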